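/- Let (e_1, ..., e_k) and (c_1, ..., c_ℓ) be two systems of pairwise orthogonal nonzero tripotents in a Jordan pair with positive Hermitian involution, and let ν_1 < ν_2 < ... < ν_k and μ_1 < ... < μ_ℓ be nonzero real numbers. Then Σ_{i=1}^k ν_i D_{e_i, ē_i} = Σ_{j=1}^ℓ μ_j D_{c_j, c̄_j} as operators on V if and only if k = ℓ, ν_i = μ_i for all i, and e_i and c_i induce the same Peirce decompositions (V_m(e_i) = V_m(c_i) for m = 0, 1, 2) for all i. -/

import Mathlib

open scoped BigOperators

/-- A (complex) Jordan pair, presented by its quadratic operators `Q, Q'` and the associated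
trilinear products `D x y z = {x y z}`, `D' y x w = {y x w}`. -/
structure JordanPairData (V V' : Type*) [AddCommGroup V] [Module ℂ V]
    [AddCommGroup V'] [Module ℂ V'] where
  Q : V → V' →ₗ[ℂ] V
  Q' : V' → V →ₗ[ℂ] V'
  D : V →ₗ[ℂ] V' →ₗ[ℂ] V →ₗ[ℂ] V
  D' : V' →ₗ[ℂ] V →ₗ[ℂ] V' →ₗ[ℂ] V'
  D_eq : ∀ x y z, D x y z = Q (x + z) y - Q x y - Q z y
  D'_eq : ∀ y x w, D' y x w = Q' (y + w) x - Q' y x - Q' w x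
  Q_smul : ∀ (c : ℂ) x y, Q (c • x) y = (c * c) • Q x y
  Q'_smul : ∀ (c : ℂ) y x, Q' (c • y) x = (c * c) • Q' y x

namespace JordanPairData

variable {V V' : Type*} [AddCommGroup V] [Module ℂ V] [AddCommGroup V'] [Module ℂ V']
variable (J : JordanPairData V V')

/-- `(e, e')` is an idempotent: `Q_e e' = e` and `Q_{e'} e = e'`. -/
def IsIdem (e : V) (e' : V') : Prop := J.Q e e' = e ∧ J.Q' e' e = e'

/-- the Bergman operator `B(x,y) = Id - D_{x,y} + Q_x Q_y` on `V`. -/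
def B (x : V) (y : V') : V →ₗ[ℂ] V := LinearMap.id - J.D x y + (J.Q x) ∘ₗ (J.Q' y)

/-- the Bergman operator on `V'`. -/
def B' (y : V') (x : V) : V' →ₗ[ℂ] V' := LinearMap.id - J.D' y x + (J.Q' y) ∘ₗ (J.Q x)

open scoped Classical in
/-- the quasi-inverse `x^y = B(x,y)⁻¹ (x - Q_x y)` (junk value if `(x,y)` is not
quasi-invertible). -/
noncomputable def qi (x : V) (y : V') : V :=
  if h : Function.Bijective (J.B x y) then (LinearEquiv.ofBijective _ h).symm (x - J.Q x y) else 0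

open scoped Classical in
/-- the quasi-inverse `y^x` on the `V'` side. -/
noncomputable def qi' (y : V') (x : V) : V' :=
  if h : Function.Bijective (J.B' y x) then (LinearEquiv.ofBijective _ h).symm (y - J.Q' y x) else 0

/-- the principal inner ideal `[x] = Q_x V'`. -/
def pii (x : V) : Submodule ℂ V := LinearMap.range (J.Q x)

/-- the rank of an element: the maximal length of chains `[x₀] ⊊ … ⊊ [x_k]` of principal inner
ideals with `x_i ∈ [x]`. -/
noncomputable def elemRank (x : V) : ℕ :=
  sSup {k : ℕ | ∃ c : Fin (k + 1) → V, (∀ i, c i ∈ J.pii x) ∧ StrictMono fun i => J.pii (c i)}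

end JordanPairData

/-- the Peirce `m`-space of `e` (with respect to the involution `bar`):
the eigenspace of `D_{e, ē}` with eigenvalue `m`. -/
noncomputable def peirceSpace {V V' : Type*} [AddCommGroup V] [Module ℂ V]
    [AddCommGroup V'] [Module ℂ V'] (J : JordanPairData V V') (bar : V → V')
    (e : V) (m : ℂ) : Submodule ℂ V :=
  Module.End.eigenspace (J.D e (bar e) : Module.End ℂ V) m

/-- the joint Peirce space `V_{ij}` (indices in `Fin (k+1)`, `0` meaning the extra index `0`)
for a system of orthogonal tripotents `e : Fin k → V`. -/
noncomputable def jointPeirceSpace {V V' : Type*} [AddCommGroup V] [Module ℂ V]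
    [AddCommGroup V'] [Module ℂ V'] (J : JordanPairData V V') (bar : V → V')
    {k : ℕ} (e : Fin k → V) (i j : Fin (k + 1)) : Submodule ℂ V :=
  ⨅ ℓ : Fin k, Module.End.eigenspace (J.D (e ℓ) (bar (e ℓ)) : Module.End ℂ V)
    (((if Fin.succ ℓ = i then 1 else 0) + (if Fin.succ ℓ = j then 1 else 0) : ℂ))

/-!
In the joint eigenspaces of `D_{eᵢ, ēᵢ}` the operator `∑ νᵢ D_{eᵢ, ēᵢ}` acts by `∑ νᵢ wᵢ` with
natural weights `wᵢ` of total size at most two. If `ν_m` has maximal norm, strict convexity shows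
that `∑ νᵢ wᵢ = 2 ν_m` only for the weight `2` concentrated at `m`, so the `2 ν_m`-eigenspace of the
sum is the Peirce 2-space of `e_m`. This Peirce 2-space is therefore determined by the sum, hence so
is `D_{e_m, ē_m}`; discarding the terms already known to agree, one reaches every coefficient in
order of decreasing norm. Coefficients occurring in one system only are handled by putting the zero
operator, whose 2-eigenspace is trivial, at the missing place of the other system.
-/

open Module.End

section Preliminaries

theorem iSupIndep_eq_of_le_of_iSup_eq_top {α κ : Type*} [CompleteLattice α] [IsModularLattice α]
    {F G : κ → α} (hF : iSupIndep F) (hGF : G ≤ F) (hG : ⨆ a, G a = ⊤) : G = F := by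
  funext a
  have hdisj : (⨆ (b) (_ : b ≠ a), G b) ⊓ F a = ⊥ :=
    ((hF a).mono_right (iSup₂_mono fun b _ => hGF b)).symm.eq_bot
  have hsup : G a ⊔ ⨆ (b) (_ : b ≠ a), G b = ⊤ := by
    refine top_le_iff.mp (hG ▸ iSup_le fun b => ?_)
    rcases eq_or_ne b a with rfl | hba
    · exact le_sup_left
    · exact (le_iSup₂ (f := fun b (_ : b ≠ a) => G b) b hba).trans le_sup_right
  calc G a = G a ⊔ (⨆ (b) (_ : b ≠ a), G b) ⊓ F a := by rw [hdisj, sup_bot_eq]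
    _ = (G a ⊔ ⨆ (b) (_ : b ≠ a), G b) ⊓ F a := (sup_inf_assoc_of_le _ (hGF a)).symm
    _ = F a := by rw [hsup, top_inf_eq]

theorem eq_of_sum_nsmul_eq_nsmul (𝕜 : Type*) {E ι : Type*} [RCLike 𝕜] [NormedAddCommGroup E]
    [InnerProductSpace 𝕜 E] {s : Finset ι} {ν : ι → E} {x : E} {w : ι → ℕ} {n : ℕ}
    (hle : ∀ i ∈ s, ‖ν i‖ ≤ ‖x‖) (hw : ∑ i ∈ s, w i ≤ n) (h : ∑ i ∈ s, w i • ν i = n • x)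
    {i : ι} (hi : i ∈ s) (hwi : w i ≠ 0) : ν i = x := by
  let φ : E → ℝ := fun y => RCLike.re (inner 𝕜 y x)
  have hφ_le : ∀ j ∈ s, φ (ν j) ≤ ‖x‖ ^ 2 := fun j hj =>
    calc φ (ν j) ≤ ‖ν j‖ * ‖x‖ := re_inner_le_norm _ _
      _ ≤ ‖x‖ * ‖x‖ := mul_le_mul_of_nonneg_right (hle j hj) (norm_nonneg x)
      _ = ‖x‖ ^ 2 := (sq _).symm
  have hnonneg : ∀ j ∈ s, 0 ≤ (w j : ℝ) * (‖x‖ ^ 2 - φ (ν j)) := fun j hj =>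
    mul_nonneg (Nat.cast_nonneg _) (sub_nonneg.mpr (hφ_le j hj))
  have hφ_sum : ∑ j ∈ s, (w j : ℝ) * φ (ν j) = n * ‖x‖ ^ 2 := by
    have hφ_nsmul : ∀ (j : ℕ) (y : E), φ (j • y) = j * φ y := fun j y => by
      simp only [φ]
      rw [← Nat.cast_smul_eq_nsmul 𝕜, inner_smul_left, map_natCast, ← nsmul_eq_mul, map_nsmul,
        nsmul_eq_mul]
    calc ∑ j ∈ s, (w j : ℝ) * φ (ν j) = φ (∑ j ∈ s, w j • ν j) := by
          simp only [← hφ_nsmul, φ, sum_inner, map_sum]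
      _ = n * φ x := by rw [h, hφ_nsmul]
      _ = n * ‖x‖ ^ 2 := by rw [← inner_self_eq_norm_sq (𝕜 := 𝕜)]
  have hsum_nonpos : ∑ j ∈ s, (w j : ℝ) * (‖x‖ ^ 2 - φ (ν j)) ≤ 0 := by
    have hw' : (∑ j ∈ s, (w j : ℝ)) ≤ n := by exact_mod_cast hw
    simp only [mul_sub, Finset.sum_sub_distrib, ← Finset.sum_mul, hφ_sum]
    exact sub_nonpos.mpr (mul_le_mul_of_nonneg_right hw' (sq_nonneg _))
  have hφ_eq : φ (ν i) = ‖x‖ ^ 2 := by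
    have hzero := (Finset.sum_eq_zero_iff_of_nonneg hnonneg).mp
      (hsum_nonpos.antisymm (Finset.sum_nonneg hnonneg)) i hi
    have := (mul_eq_zero.mp hzero).resolve_left (Nat.cast_ne_zero.mpr hwi)
    exact (sub_eq_zero.mp this).symm
  exact eq_of_norm_le_re_inner_eq_norm_sq (hle i hi) hφ_eq

theorem sum_mul_natCast_eq_natCast_mul_iff {𝕜 ι : Type*} [RCLike 𝕜] {s : Finset ι} {ν : ι → 𝕜}
    (hν : ν.Injective) {m : ι} (hm : m ∈ s) (hm0 : ν m ≠ 0) (hle : ∀ i ∈ s, ‖ν i‖ ≤ ‖ν m‖)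
    {w : ι → ℕ} {n : ℕ} (hw : ∑ i ∈ s, w i ≤ n) :
    ∑ i ∈ s, ν i * w i = n * ν m ↔ w m = n := by
  classical
  suffices hconc : ∑ i ∈ s, ν i * w i = n * ν m ∨ w m = n → ∀ i ∈ s, i ≠ m → w i = 0 by
    have hsum : (∀ i ∈ s, i ≠ m → w i = 0) → ∑ i ∈ s, ν i * w i = w m * ν m := fun h0 => by
      rw [Finset.sum_eq_single_of_mem m hm fun i hi him => by simp [h0 i hi him], mul_comm]
    refine ⟨fun h => ?_, fun h => by rw [hsum (hconc (.inr h)), h]⟩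
    rw [hsum (hconc (.inl h))] at h
    exact_mod_cast mul_right_cancel₀ hm0 h
  rintro (h | h) i hi him
  · by_contra hwi
    refine him (hν (eq_of_sum_nsmul_eq_nsmul 𝕜 hle hw ?_ hi hwi))
    simpa only [nsmul_eq_mul, mul_comm] using h
  · have := Finset.add_sum_erase s w hm
    have := Finset.single_le_sum (f := w) (fun _ _ => Nat.zero_le _)
      (Finset.mem_erase.mpr ⟨him, hi⟩)
    lia

theorem exists_equiv_of_extend_eq {ι κ P M : Type*} [Zero M] {f : ι → P} {g : κ → P} {a : ι → M}
    {b : κ → M} (hf : f.Injective) (hg : g.Injective) (ha : ∀ i, a i ≠ 0) (hb : ∀ j, b j ≠ 0)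
    (h : Function.extend f a 0 = Function.extend g b 0) :
    ∃ σ : ι ≃ κ, ∀ i, f i = g (σ i) ∧ a i = b (σ i) := by
  have hrange : Set.range f = Set.range g := by
    have hsupp := congrArg Function.support h
    rwa [Function.support_extend_zero hf, Function.support_extend_zero hg,
      Function.support_eq_univ ha, Function.support_eq_univ hb, Set.image_univ,
      Set.image_univ] at hsupp
  let σ : ι ≃ κ := (Equiv.ofInjective f hf).trans
    ((Equiv.setCongr hrange).trans (Equiv.ofInjective g hg).symm)
  have hσ : ∀ i, g (σ i) = f i := fun i => Equiv.apply_ofInjective_symm hg _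
  refine ⟨σ, fun i => ⟨(hσ i).symm, ?_⟩⟩
  calc a i = Function.extend f a 0 (f i) := (hf.extend_apply ..).symm
    _ = Function.extend g b 0 (g (σ i)) := by rw [h, hσ]
    _ = b (σ i) := hg.extend_apply ..

theorem sum_extend_zero {ι κ M N : Type*} [Fintype ι] [Fintype κ] [Zero M] [AddCommMonoid N]
    {f : ι → κ} (hf : f.Injective) (a : ι → M) {F : κ → M → N} (hF : ∀ x, F x 0 = 0) :
    ∑ x, F x (Function.extend f a 0 x) = ∑ i, F (f i) (a i) := by
  refine (Fintype.sum_of_injective f hf _ _ (fun x hx => ?_) fun i => ?_).symm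
  · rw [Function.extend_apply' _ _ _ hx, Pi.zero_apply, hF]
  · rw [hf.extend_apply]

theorem extend_zero_apply_eq_of_apply_eq {ι κ P M N : Type*} [Zero M] {f : ι → P} {g : κ → P}
    {a : ι → M} {b : κ → M} (hf : f.Injective) (hg : g.Injective) {φ : M → N}
    (ha : ∀ i, φ (a i) ≠ φ 0) (hb : ∀ j, φ (b j) ≠ φ 0) (hab : ∀ i j, φ (a i) = φ (b j) → a i = b j)
    {x : P} (h : φ (Function.extend f a 0 x) = φ (Function.extend g b 0 x)) :
    Function.extend f a 0 x = Function.extend g b 0 x := by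
  by_cases hxf : x ∈ Set.range f <;> by_cases hxg : x ∈ Set.range g
  · obtain ⟨i, rfl⟩ := hxf
    obtain ⟨j, hj⟩ := hxg
    rw [← hj, hg.extend_apply, hj, hf.extend_apply] at h ⊢
    exact hab i j h
  · obtain ⟨i, rfl⟩ := hxf
    rw [hf.extend_apply, Function.extend_apply' _ _ _ hxg] at h
    exact absurd h (ha i)
  · obtain ⟨j, rfl⟩ := hxg
    rw [hg.extend_apply, Function.extend_apply' _ _ _ hxf] at h
    exact absurd h.symm (hb j)
  · rw [Function.extend_apply' _ _ _ hxf, Function.extend_apply' _ _ _ hxg]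

theorem exists_equiv_iff_exists_finCast {k l : ℕ} {R : Type*} [LinearOrder R] {ν : Fin k → R}
    {μ : Fin l → R} (hν : StrictMono ν) (hμ : StrictMono μ) (p : Fin k → Fin l → Prop) :
    (∃ σ : Fin k ≃ Fin l, ∀ i, ν i = μ (σ i) ∧ p i (σ i)) ↔
      ∃ h : k = l, ∀ i, ν i = μ (Fin.cast h i) ∧ p i (Fin.cast h i) := by
  refine ⟨?_, fun ⟨h, hp⟩ => ⟨finCongr h, hp⟩⟩
  rintro ⟨σ, hσ⟩
  obtain rfl : k = l := Fin.equiv_iff_eq.mp ⟨σ⟩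
  have hσ_mono : StrictMono σ := fun i j hij => by
    rw [← hμ.lt_iff_lt, ← (hσ i).1, ← (hσ j).1]
    exact hν hij
  have hσ_id : ∀ i, σ i = i := fun i => by
    have : hσ_mono.orderIsoOfSurjective σ σ.surjective = OrderIso.refl (Fin k) :=
      Subsingleton.elim _ _
    exact congrArg (fun τ : Fin k ≃o Fin k => τ i) this
  exact ⟨rfl, fun i => by simpa only [hσ_id, Fin.cast_refl, id] using hσ i⟩

theorem iInf_eigenspace_le_eigenspace_sum_smul {ι R V : Type*} [CommRing R] [AddCommGroup V]
    [Module R V] (A : ι → Module.End R V) (s : Finset ι) (a w : ι → R) :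
    ⨅ i, eigenspace (A i) (w i) ≤ eigenspace (∑ i ∈ s, a i • A i) (∑ i ∈ s, a i * w i) := by
  intro v hv
  rw [mem_eigenspace_iff, LinearMap.sum_apply, Finset.sum_smul]
  refine Finset.sum_congr rfl fun i _ => ?_
  rw [LinearMap.smul_apply, mem_eigenspace_iff.mp ((Submodule.mem_iInf _).mp hv i), smul_smul]

theorem eigenspace_zero_of_ne_zero {R V : Type*} [CommRing R] [IsDomain R] [AddCommGroup V]
    [Module R V] [Module.IsTorsionFree R V] {a : R} (ha : a ≠ 0) :
    eigenspace (0 : Module.End R V) a = ⊥ := by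
  refine (Submodule.eq_bot_iff _).mpr fun v hv => ?_
  rw [mem_eigenspace_iff, LinearMap.zero_apply, eq_comm] at hv
  exact (smul_eq_zero.mp hv).resolve_left ha

end Preliminaries

section PeirceFamily

variable {ι κ V : Type*} [Fintype ι] [Fintype κ] [AddCommGroup V]

/-- A finite family of operators whose joint eigenspaces with natural weights of total size at most
two span the space, like the operators `D_{eᵢ, ēᵢ}` of orthogonal tripotents: the joint Peirce space
`V_{ij}` has the weight `δᵢ + δⱼ`, where `δ₀ = 0`. Zero operators are allowed, so that a
family can be extended by zero to a larger index set. -/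
def IsPeirceFamily {R : Type*} [CommRing R] [Module R V] (A : ι → Module.End R V) : Prop :=
  ⨆ w : {w : ι → ℕ // ∑ i, w i ≤ 2}, ⨅ i, eigenspace (A i) (w.1 i : R) = ⊤

namespace IsPeirceFamily

section CommRing

variable {R : Type*} [CommRing R] [Module R V] {A : ι → Module.End R V}

theorem apply_eq_iff (hA : IsPeirceFamily A) {i : ι} {f : Module.End R V} :
    A i = f ↔ ∀ m : R, m = 0 ∨ m = 1 ∨ m = 2 → eigenspace (A i) m = eigenspace f m := by
  refine ⟨fun h m _ => by rw [h], fun h => ?_⟩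
  suffices hle : ⊤ ≤ LinearMap.eqLocus (A i) f from
    LinearMap.ext fun v => hle (Submodule.mem_top (x := v))
  refine hA.symm.le.trans (iSup_le fun w v hv => ?_)
  have hwi : w.1 i ≤ 2 :=
    (Finset.single_le_sum (fun _ _ => Nat.zero_le _) (Finset.mem_univ i)).trans w.2
  have hvA : v ∈ eigenspace (A i) (w.1 i : R) := (Submodule.mem_iInf _).mp hv i
  have hvf : v ∈ eigenspace f (w.1 i : R) := by
    rwa [← h _ (by interval_cases w.1 i <;> simp)]
  rw [LinearMap.mem_eqLocus, mem_eigenspace_iff.mp hvA, mem_eigenspace_iff.mp hvf]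

theorem extend_zero (hA : IsPeirceFamily A) {f : ι → κ} (hf : f.Injective) :
    IsPeirceFamily (Function.extend f A 0) := by
  refine top_le_iff.mp (hA.symm.le.trans (iSup_le fun w => ?_))
  have hsum : ∑ x, Function.extend f w.1 0 x = ∑ i, w.1 i :=
    sum_extend_zero hf w.1 (F := fun _ n => n) fun _ => rfl
  refine le_iSup_of_le ⟨Function.extend f w.1 0, hsum.trans_le w.2⟩ (le_iInf fun x => ?_)
  by_cases hx : x ∈ Set.range f
  · obtain ⟨i, rfl⟩ := hx
    simpa only [hf.extend_apply] using iInf_le _ i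
  · intro v _
    simp [Function.extend_apply' _ _ _ hx]

theorem eigenspace_sum_smul [IsDomain R] [Module.IsTorsionFree R V] (hA : IsPeirceFamily A)
    (s : Finset ι) (a : ι → R) (x : R) :
    eigenspace (∑ i ∈ s, a i • A i) x =
      ⨆ (w : {w : ι → ℕ // ∑ i, w i ≤ 2}) (_ : ∑ i ∈ s, a i * w.1 i = x),
        ⨅ i, eigenspace (A i) (w.1 i : R) := by
  have hindep := eigenspaces_iSupIndep (∑ i ∈ s, a i • A i)
  let G (y : R) := ⨆ (w : {w : ι → ℕ // ∑ i, w i ≤ 2}) (_ : ∑ i ∈ s, a i * w.1 i = y),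
    ⨅ i, eigenspace (A i) (w.1 i : R)
  refine (congrFun (iSupIndep_eq_of_le_of_iSup_eq_top (G := G) hindep ?_ ?_) x).symm
  · exact fun y => iSup₂_le fun w hw =>
      hw ▸ iInf_eigenspace_le_eigenspace_sum_smul A s a fun i => (w.1 i : R)
  · rw [iSup_comm]
    simp only [iSup_iSup_eq_right]
    exact hA

end CommRing

section RCLike

variable {𝕜 : Type*} [RCLike 𝕜] [Module 𝕜 V] {A : ι → Module.End 𝕜 V} {C : κ → Module.End 𝕜 V}

theorem eigenspace_sum_smul_two_mul (hA : IsPeirceFamily A) {s : Finset ι} {ν : ι → 𝕜}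
    (hν : ν.Injective) {m : ι} (hm : m ∈ s) (hm0 : ν m ≠ 0) (hle : ∀ i ∈ s, ‖ν i‖ ≤ ‖ν m‖) :
    eigenspace (∑ i ∈ s, ν i • A i) (2 * ν m) = eigenspace (A m) 2 := by
  classical
  have hsingle := hA.eigenspace_sum_smul {m} (fun _ => 1) 2
  simp only [Finset.sum_singleton, one_smul, one_mul] at hsingle
  rw [hA.eigenspace_sum_smul, hsingle]
  refine iSup_congr fun w => iSup_congr_Prop ?_ fun _ => rfl
  have hws : ∑ i ∈ s, w.1 i ≤ 2 :=
    (Finset.sum_le_univ_sum_of_nonneg fun _ => Nat.zero_le _).trans w.2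
  exact_mod_cast sum_mul_natCast_eq_natCast_mul_iff hν hm hm0 hle hws

theorem eq_of_sum_smul_eq {A C : ι → Module.End 𝕜 V} (hA : IsPeirceFamily A)
    (hC : IsPeirceFamily C) {ν : ι → 𝕜} (hν : ν.Injective) (hν0 : ∀ i, ν i ≠ 0)
    (hdet : ∀ i, eigenspace (A i) 2 = eigenspace (C i) 2 → A i = C i)
    (h : ∑ i, ν i • A i = ∑ i, ν i • C i) : A = C := by
  classical
  by_contra hne
  obtain ⟨i₀, hi₀⟩ := Function.ne_iff.mp hne
  obtain ⟨m, hm, hmax⟩ := (Finset.univ.filter fun i => A i ≠ C i).exists_max_image (‖ν ·‖)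
    ⟨i₀, by simpa using hi₀⟩
  simp only [Finset.mem_filter, Finset.mem_univ, true_and] at hm hmax
  let s : Finset ι := {i | ‖ν i‖ ≤ ‖ν m‖}
  have hms : m ∈ s := by simp [s]
  have hle : ∀ i ∈ s, ‖ν i‖ ≤ ‖ν m‖ := by simp [s]
  have hcompl : ∑ i ∈ sᶜ, ν i • A i = ∑ i ∈ sᶜ, ν i • C i := Finset.sum_congr rfl fun i hi => by
    have : A i = C i := by
      by_contra hi'
      simpa [s] using (Finset.mem_compl.mp hi) (by simpa [s] using hmax i hi')
    rw [this]
  have htrunc : ∑ i ∈ s, ν i • A i = ∑ i ∈ s, ν i • C i := by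
    rw [← Finset.sum_add_sum_compl s, ← Finset.sum_add_sum_compl s (fun i => ν i • C i),
      hcompl] at h
    exact add_right_cancel h
  refine hm (hdet m ?_)
  rw [← hA.eigenspace_sum_smul_two_mul hν hms (hν0 m) hle, htrunc,
    hC.eigenspace_sum_smul_two_mul hν hms (hν0 m) hle]

theorem exists_equiv_of_sum_smul_eq {P : Type*} [Finite P] (hA : IsPeirceFamily A)
    (hC : IsPeirceFamily C) (hA2 : ∀ i, eigenspace (A i) 2 ≠ ⊥)
    (hC2 : ∀ j, eigenspace (C j) 2 ≠ ⊥)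
    (hdet : ∀ i j, eigenspace (A i) 2 = eigenspace (C j) 2 → A i = C j)
    {f : ι → P} {g : κ → P} (hf : f.Injective) (hg : g.Injective)
    {ν : P → 𝕜} (hν : ν.Injective) (hν0 : ∀ x, ν x ≠ 0)
    (h : ∑ i, ν (f i) • A i = ∑ j, ν (g j) • C j) :
    ∃ σ : ι ≃ κ, ∀ i, f i = g (σ i) ∧ A i = C (σ i) := by
  have := Fintype.ofFinite P
  have hzero : eigenspace (0 : Module.End 𝕜 V) 2 = ⊥ := eigenspace_zero_of_ne_zero two_ne_zero
  refine exists_equiv_of_extend_eq hf hg (fun i hi => hA2 i (by rw [hi, hzero]))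
    (fun j hj => hC2 j (by rw [hj, hzero])) ?_
  refine (hA.extend_zero hf).eq_of_sum_smul_eq (hC.extend_zero hg) hν hν0 (fun x =>
    extend_zero_apply_eq_of_apply_eq hf hg (φ := (eigenspace · (2 : 𝕜))) ?_ ?_ hdet) ?_
  · simpa only [hzero] using hA2
  · simpa only [hzero] using hC2
  · rw [sum_extend_zero hf A (F := fun x B => ν x • B) fun _ => smul_zero _,
      sum_extend_zero hg C (F := fun x B => ν x • B) fun _ => smul_zero _, h]

theorem sum_smul_eq_sum_smul_iff (hA : IsPeirceFamily A) (hC : IsPeirceFamily C)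
    (hA2 : ∀ i, eigenspace (A i) 2 ≠ ⊥) (hC2 : ∀ j, eigenspace (C j) 2 ≠ ⊥)
    (hdet : ∀ i j, eigenspace (A i) 2 = eigenspace (C j) 2 → A i = C j)
    {ν : ι → 𝕜} {μ : κ → 𝕜} (hν : ν.Injective) (hμ : μ.Injective)
    (hν0 : ∀ i, ν i ≠ 0) (hμ0 : ∀ j, μ j ≠ 0) :
    ∑ i, ν i • A i = ∑ j, μ j • C j ↔ ∃ σ : ι ≃ κ, ∀ i, ν i = μ (σ i) ∧ A i = C (σ i) := by
  refine ⟨fun h => ?_, fun ⟨σ, hσ⟩ =>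
    Fintype.sum_equiv σ _ _ fun i => by rw [(hσ i).1, (hσ i).2]⟩
  let P : Set 𝕜 := Set.range ν ∪ Set.range μ
  let f : ι → P := fun i => ⟨ν i, .inl ⟨i, rfl⟩⟩
  let g : κ → P := fun j => ⟨μ j, .inr ⟨j, rfl⟩⟩
  have hf : f.Injective := fun i j hij => hν (congrArg Subtype.val hij)
  have hg : g.Injective := fun i j hij => hμ (congrArg Subtype.val hij)
  have hP0 : ∀ x : P, (x : 𝕜) ≠ 0 := by
    rintro ⟨_, ⟨i, rfl⟩ | ⟨j, rfl⟩⟩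
    exacts [hν0 i, hμ0 j]
  obtain ⟨σ, hσ⟩ :=
    hA.exists_equiv_of_sum_smul_eq hC hA2 hC2 hdet hf hg Subtype.val_injective hP0 h
  exact ⟨σ, fun i => ⟨congrArg Subtype.val (hσ i).1, (hσ i).2⟩⟩

end RCLike

end IsPeirceFamily

end PeirceFamily

section Tripotent

variable {V V' : Type*} [AddCommGroup V] [Module ℂ V] [AddCommGroup V'] [Module ℂ V']
  {J : JordanPairData V V'} {bar : V → V'}

theorem self_mem_peirceSpace_two {e : V} (htrip : J.Q e (bar e) = e) :
    e ∈ peirceSpace J bar e 2 := by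
  rw [peirceSpace, mem_eigenspace_iff, J.D_eq, ← two_smul ℂ e, J.Q_smul, htrip]
  module

theorem isPeirceFamily_of_iSup_jointPeirceSpace_eq_top {k : ℕ} {e : Fin k → V}
    (hdec : ⨆ p : Fin (k + 1) × Fin (k + 1), jointPeirceSpace J bar e p.1 p.2 = ⊤) :
    IsPeirceFamily fun i => (J.D (e i) (bar (e i)) : Module.End ℂ V) := by
  have hcount : ∀ q : Fin (k + 1), ∑ i : Fin k, (if i.succ = q then 1 else 0) ≤ 1 := fun q => by
    cases q using Fin.cases with
    | zero => simp [Fin.succ_ne_zero]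
    | succ q => simp
  refine top_le_iff.mp (hdec ▸ iSup_le fun p => ?_)
  refine le_iSup_of_le
    ⟨fun i => (if i.succ = p.1 then 1 else 0) + (if i.succ = p.2 then 1 else 0), ?_⟩ (le_of_eq ?_)
  · rw [Finset.sum_add_distrib]
    exact add_le_add (hcount p.1) (hcount p.2)
  · simp [jointPeirceSpace]

theorem orthogonal_tripotent_operator_equality_general {k l : ℕ} {e : Fin k → V} {c : Fin l → V}
    (htrip_e : ∀ i, J.Q (e i) (bar (e i)) = e i) (hne_e : ∀ i, e i ≠ 0)
    (htrip_c : ∀ j, J.Q (c j) (bar (c j)) = c j) (hne_c : ∀ j, c j ≠ 0)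
    {ν : Fin k → ℂ} {μ : Fin l → ℂ} (hν : ν.Injective) (hν0 : ∀ i, ν i ≠ 0)
    (hμ : μ.Injective) (hμ0 : ∀ j, μ j ≠ 0)
    (hdec_e : ⨆ p : Fin (k + 1) × Fin (k + 1), jointPeirceSpace J bar e p.1 p.2 = ⊤)
    (hdec_c : ⨆ p : Fin (l + 1) × Fin (l + 1), jointPeirceSpace J bar c p.1 p.2 = ⊤)
    (hdet : ∀ i j, peirceSpace J bar (e i) 2 = peirceSpace J bar (c j) 2 →
      ∀ m : ℂ, m = 0 ∨ m = 1 ∨ m = 2 → peirceSpace J bar (e i) m = peirceSpace J bar (c j) m) :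
    (∑ i, ν i • (J.D (e i) (bar (e i)) : V →ₗ[ℂ] V)
        = ∑ j, μ j • (J.D (c j) (bar (c j)) : V →ₗ[ℂ] V)) ↔
      ∃ σ : Fin k ≃ Fin l, ∀ i, ν i = μ (σ i) ∧
        ∀ m : ℂ, m = 0 ∨ m = 1 ∨ m = 2 →
          peirceSpace J bar (e i) m = peirceSpace J bar (c (σ i)) m := by
  have hA := isPeirceFamily_of_iSup_jointPeirceSpace_eq_top hdec_e
  have hC := isPeirceFamily_of_iSup_jointPeirceSpace_eq_top hdec_c
  have hA2 : ∀ i, peirceSpace J bar (e i) 2 ≠ ⊥ := fun i =>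
    (Submodule.ne_bot_iff _).mpr ⟨e i, self_mem_peirceSpace_two (htrip_e i), hne_e i⟩
  have hC2 : ∀ j, peirceSpace J bar (c j) 2 ≠ ⊥ := fun j =>
    (Submodule.ne_bot_iff _).mpr ⟨c j, self_mem_peirceSpace_two (htrip_c j), hne_c j⟩
  rw [hA.sum_smul_eq_sum_smul_iff hC hA2 hC2
    (fun i j h => hA.apply_eq_iff.mpr (hdet i j h)) hν hμ hν0 hμ0]
  exact exists_congr fun σ => forall_congr' fun i => and_congr_right' hA.apply_eq_iff

end Tripotent

/-- let `(e₁, …, e_k)` and `(c₁, …, c_ℓ)` be systems of pairwise orthogonal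
nonzero tripotents, and `ν₁ < … < ν_k`, `μ₁ < … < μ_ℓ` nonzero real numbers.  Then
`Σ νᵢ D_{eᵢ, ēᵢ} = Σ μⱼ D_{cⱼ, c̄ⱼ}` iff `k = ℓ`, `νᵢ = μᵢ` and `eᵢ ≈ cᵢ` (same Peirce
decompositions) for all `i`.  The existence of the joint Peirce decompositions and the fact
that Peirce 2-spaces of tripotents determine the whole Peirce decomposition are assumed. -/
theorem orthogonal_tripotent_operator_equality {V V' : Type*} [AddCommGroup V] [Module ℂ V]
    [AddCommGroup V'] [Module ℂ V'] (J : JordanPairData V V') (bar : V → V')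
    {k l : ℕ} (e : Fin k → V) (c : Fin l → V)
    (htrip_e : ∀ i, J.Q (e i) (bar (e i)) = e i) (hne_e : ∀ i, e i ≠ 0)
    (horth_e : ∀ i j, i ≠ j → J.D (e i) (bar (e i)) (e j) = 0)
    (htrip_c : ∀ i, J.Q (c i) (bar (c i)) = c i) (hne_c : ∀ i, c i ≠ 0)
    (horth_c : ∀ i j, i ≠ j → J.D (c i) (bar (c i)) (c j) = 0)
    (ν : Fin k → ℝ) (μ : Fin l → ℝ)
    (hν : StrictMono ν) (hν0 : ∀ i, ν i ≠ 0)
    (hμ : StrictMono μ) (hμ0 : ∀ j, μ j ≠ 0)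
    (hdec_e : (⨆ p : Fin (k + 1) × Fin (k + 1), jointPeirceSpace J bar e p.1 p.2) = ⊤)
    (hdec_c : (⨆ p : Fin (l + 1) × Fin (l + 1), jointPeirceSpace J bar c p.1 p.2) = ⊤)
    (hdet : ∀ a b : V, J.Q a (bar a) = a → J.Q b (bar b) = b →
      peirceSpace J bar a 2 = peirceSpace J bar b 2 →
      ∀ m : ℂ, peirceSpace J bar a m = peirceSpace J bar b m) :
    (∑ i, (ν i : ℂ) • (J.D (e i) (bar (e i)) : V →ₗ[ℂ] V)
        = ∑ j, (μ j : ℂ) • (J.D (c j) (bar (c j)) : V →ₗ[ℂ] V)) ↔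
      ∃ h : k = l, ∀ i : Fin k,
        ν i = μ (Fin.cast h i) ∧
        ∀ m : ℂ, m = 0 ∨ m = 1 ∨ m = 2 →
          peirceSpace J bar (e i) m = peirceSpace J bar (c (Fin.cast h i)) m := by
  refine (orthogonal_tripotent_operator_equality_general htrip_e hne_e htrip_c hne_c
    (Complex.ofReal_injective.comp hν.injective) (by simpa using hν0)
    (Complex.ofReal_injective.comp hμ.injective) (by simpa using hμ0) hdec_e hdec_c
    fun i j h m _ => hdet _ _ (htrip_e i) (htrip_c j) h m).trans ?_
  simp only [Function.comp_apply, Complex.ofReal_inj]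
  exact exists_equiv_iff_exists_finCast hν hμ fun i j => ∀ m : ℂ, m = 0 ∨ m = 1 ∨ m = 2 →
    peirceSpace J bar (e i) m = peirceSpace J bar (c j) m
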